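/- Let λ be a p-core partition with at most m parts of length l(λ). Let 1 ≤ i < j ≤ l(λ) and let a, l ≥ 1 be integers with (λ+ρ)_i + (λ+ρ)_j = a + lp and (λ+ρ)_j − a > 0, and assume the vector v := s_{ε_i+ε_j,l}(λ+ρ) is regular. Then all entries of v are pairwise distinct and strictly positive; moreover the first l(λ) entries of v are all greater than m − l(λ). Consequently, if μ denotes the weakly decreasing rearrangement of v minus ρ, then μ is a partition with at most m parts satisfying μ_k ≤ λ_k for all k and μ ≠ λ, the rearrangement permutes only the first l(λ) coordinates, and μ is conjugate to λ under the dot action of W_p(D_{l(λ)}). -/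

import Mathlib

/-- ρ = (m, m-1, …, 1); with 0-indexed coordinates, ρ k = m - k. -/
def rho {m : ℕ} : Fin m → ℤ := fun k => (m : ℤ) - (k : ℕ)

/-- A partition with at most m parts: weakly decreasing and nonnegative entries. -/
def IsPartitionVec {m : ℕ} (lam : Fin m → ℤ) : Prop :=
  (∀ i j : Fin m, i ≤ j → lam j ≤ lam i) ∧ ∀ i, 0 ≤ lam i

/-- The length of a partition: the number of nonzero entries. -/
def plen {m : ℕ} (lam : Fin m → ℤ) : ℕ :=
  (Finset.univ.filter fun i => lam i ≠ 0).card

/-- A vector is regular if all entries are nonzero and no two entries have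
the same absolute value. -/
def Regular {m : ℕ} (v : Fin m → ℤ) : Prop :=
  (∀ k, v k ≠ 0) ∧ ∀ k k', k ≠ k' → |v k| ≠ |v k'|

/-- Affine reflection s_{ε_i−ε_j,l}: x ↦ x − a(e_i − e_j), a = x_i − x_j − lp. -/
def sMinus {m : ℕ} (p : ℤ) (i j : Fin m) (l : ℤ) (x : Fin m → ℤ) : Fin m → ℤ :=
  fun k => x k - (x i - x j - l * p) * ((if k = i then 1 else 0) - (if k = j then 1 else 0))

/-- Affine reflection s_{ε_i+ε_j,l}: x ↦ x − a(e_i + e_j), a = x_i + x_j − lp. -/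
def sPlus {m : ℕ} (p : ℤ) (i j : Fin m) (l : ℤ) (x : Fin m → ℤ) : Fin m → ℤ :=
  fun k => x k - (x i + x j - l * p) * ((if k = i then 1 else 0) + (if k = j then 1 else 0))

/-- Affine reflection s_{2ε_i,l}: x ↦ x − 2a·e_i, a = x_i − lp. -/
def sDouble {m : ℕ} (p : ℤ) (i : Fin m) (l : ℤ) (x : Fin m → ℤ) : Fin m → ℤ :=
  fun k => x k - 2 * (x i - l * p) * (if k = i then 1 else 0)

/-- λ is a p-core: for every i and every l ≥ 1 with (λ+ρ)_i − lp > 0, the number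
(λ+ρ)_i − lp occurs as an entry of λ+ρ. -/
def IsPCore {m : ℕ} (p : ℕ) (lam : Fin m → ℤ) : Prop :=
  ∀ (i : Fin m) (l : ℤ), 1 ≤ l → 0 < lam i + rho i - l * p →
    ∃ j : Fin m, lam j + rho j = lam i + rho i - l * p

/-- The affine reflection s_{ε_i−ε_j,l} as a bijection of ℤ^m. -/
def sMinusPerm {m : ℕ} (p : ℤ) (i j : Fin m) (h : i ≠ j) (l : ℤ) :
    Equiv.Perm (Fin m → ℤ) :=
  Function.Involutive.toPerm (sMinus p i j l) (by
    intro x; funext k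
    simp only [sMinus]
    by_cases hki : k = i <;> by_cases hkj : k = j <;>
      simp [hki, hkj, h, Ne.symm h] <;> ring)

/-- The affine reflection s_{ε_i+ε_j,l} as a bijection of ℤ^m. -/
def sPlusPerm {m : ℕ} (p : ℤ) (i j : Fin m) (h : i ≠ j) (l : ℤ) :
    Equiv.Perm (Fin m → ℤ) :=
  Function.Involutive.toPerm (sPlus p i j l) (by
    intro x; funext k
    simp only [sPlus]
    by_cases hki : k = i <;> by_cases hkj : k = j <;>
      simp [hki, hkj, h, Ne.symm h] <;> ring)

/-- The affine reflection s_{2ε_i,l} as a bijection of ℤ^m. -/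
def sDoublePerm {m : ℕ} (p : ℤ) (i : Fin m) (l : ℤ) :
    Equiv.Perm (Fin m → ℤ) :=
  Function.Involutive.toPerm (sDouble p i l) (by
    intro x; funext k
    simp only [sDouble]
    by_cases hki : k = i <;> simp [hki] <;> ring)

/-- Generators of W_p(D_s): the reflections s_{ε_i−ε_j,l} and s_{ε_i+ε_j,l}
for 1 ≤ i < j ≤ s (0-indexed: i < j, (j:ℕ) < s) and l ∈ ℤ. -/
def DGenerators (m : ℕ) (p : ℤ) (s : ℕ) : Set (Equiv.Perm (Fin m → ℤ)) :=
  {σ | ∃ (i j : Fin m) (l : ℤ) (h : i < j), (j : ℕ) < s ∧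
        (σ = sMinusPerm p i j h.ne l ∨ σ = sPlusPerm p i j h.ne l)}

/-- The affine Weyl group W_p(D_s). -/
def WpD (m : ℕ) (p : ℤ) (s : ℕ) : Subgroup (Equiv.Perm (Fin m → ℤ)) :=
  Subgroup.closure (DGenerators m p s)

/-- Generators of W_p(C_s): those of W_p(D_s) together with the reflections
s_{2ε_i,l} for 1 ≤ i ≤ s (0-indexed: (i:ℕ) < s) and l ∈ ℤ. -/
def CGenerators (m : ℕ) (p : ℤ) (s : ℕ) : Set (Equiv.Perm (Fin m → ℤ)) :=
  DGenerators m p s ∪ {σ | ∃ (i : Fin m) (l : ℤ), (i : ℕ) < s ∧ σ = sDoublePerm p i l}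

/-- The affine Weyl group W_p(C_s). -/
def WpC (m : ℕ) (p : ℤ) (s : ℕ) : Subgroup (Equiv.Perm (Fin m → ℤ)) :=
  Subgroup.closure (CGenerators m p s)

/-- μ and ν are conjugate under the dot action of the group G:
some element of G maps μ+ρ to ν+ρ. -/
def DotConj {m : ℕ} (G : Subgroup (Equiv.Perm (Fin m → ℤ))) (mu nu : Fin m → ℤ) : Prop :=
  ∃ g ∈ G, g (fun k => mu k + rho k) = fun k => nu k + rho k

theorem lt_plen_of_ne_zero {m : ℕ} {lam : Fin m → ℤ} (hpart : IsPartitionVec lam)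
    {k : Fin m} (hk : lam k ≠ 0) : (k : ℕ) < plen lam := by
  have hsub : Finset.Iic k ⊆ Finset.univ.filter fun i => lam i ≠ 0 := by
    intro i hi
    have h1 := hpart.1 i k (Finset.mem_Iic.1 hi)
    have h2 := hpart.2 k
    simp only [Finset.mem_filter, Finset.mem_univ, true_and]
    omega
  have hcard := Finset.card_le_card hsub
  rw [Fin.card_Iic] at hcard
  exact hcard

theorem IsPartitionVec.add_rho_lt {m : ℕ} {lam : Fin m → ℤ} (hpart : IsPartitionVec lam)
    {k k' : Fin m} (h : k < k') : lam k' + rho k' < lam k + rho k := by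
  have h1 := hpart.1 k k' h.le
  have h2 : (k : ℕ) < k' := h
  simp only [rho]
  omega

/-- Subtracting `rho` from a strictly decreasing positive vector gives a partition. -/
theorem isPartitionVec_of_add_rho {m : ℕ} {mu : Fin m → ℤ}
    (hpos : ∀ k, 0 < mu k + rho k)
    (hlt : ∀ k k' : Fin m, k < k' → mu k' + rho k' < mu k + rho k) :
    IsPartitionVec mu := by
  have step : ∀ (d : ℕ) (k k' : Fin m), (k' : ℕ) = k + d → mu k' ≤ mu k := by
    intro d
    induction d with
    | zero =>
      intro k k' h
      rw [Fin.ext (h.trans (Nat.add_zero _))]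
    | succ d ih =>
      intro k k' h
      have hk' := k'.isLt
      have h1 := ih k ⟨k + d, by omega⟩ rfl
      have h2 := hlt ⟨k + d, by omega⟩ k' (Fin.lt_def.2 (by simp only; omega))
      simp only [rho] at h2
      push_cast at h2
      omega
  have anti : ∀ k k' : Fin m, k ≤ k' → mu k' ≤ mu k := fun k k' h =>
    step (k' - k) k k' (by have : (k : ℕ) ≤ k' := h; omega)
  refine ⟨anti, fun k => ?_⟩
  have hk := k.isLt
  have h1 := anti k ⟨m - 1, by omega⟩ (Fin.le_def.2 (by simp only; omega))
  have h2 := hpos ⟨m - 1, by omega⟩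
  simp only [rho] at h2
  omega

theorem exists_le_apply_of_perm {m : ℕ} (σ : Equiv.Perm (Fin m)) (k : Fin m) :
    ∃ t ≤ k, k ≤ σ t := by
  by_contra! hcon
  have hcard := Finset.card_le_card_of_injOn (s := Finset.Iic k) (t := Finset.Iio k) σ
    (fun t ht => by simpa using hcon t (by simpa using ht)) σ.injective.injOn
  simp at hcard

/-- If `v ≤ x` with `x` weakly decreasing, any weakly decreasing rearrangement of `v`
is bounded by `x`. -/
theorem comp_perm_le_of_antitone {m : ℕ} {v x : Fin m → ℤ} (hle : ∀ k, v k ≤ x k)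
    (hx : Antitone x) (σ : Equiv.Perm (Fin m)) (hσ : Antitone (v ∘ σ)) (k : Fin m) :
    v (σ k) ≤ x k := by
  obtain ⟨t, htk, hkt⟩ := exists_le_apply_of_perm σ k
  exact (hσ htk).trans ((hle _).trans (hx hkt))

theorem sMinus_zero_eq_comp_swap {m : ℕ} (p : ℤ) {i j : Fin m} (h : i ≠ j) (x : Fin m → ℤ) :
    sMinus p i j 0 x = x ∘ Equiv.swap i j := by
  funext k
  simp only [sMinus, Function.comp_apply]
  by_cases hki : k = i
  · subst hki
    simp [h]
  · by_cases hkj : k = j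
    · subst hkj
      simp [hki]
    · simp [hki, hkj, Equiv.swap_apply_of_ne_of_ne hki hkj]

theorem exists_mem_WpD_eq_comp_swap {m : ℕ} (p : ℤ) {s : ℕ} {i j : Fin m} (h : i ≠ j)
    (hi : (i : ℕ) < s) (hj : (j : ℕ) < s) :
    ∃ g ∈ WpD m p s, ∀ x, g x = x ∘ Equiv.swap i j := by
  rcases lt_or_gt_of_ne h with hlt | hlt
  · exact ⟨sMinusPerm p i j hlt.ne 0,
      Subgroup.subset_closure ⟨i, j, 0, hlt, hj, Or.inl rfl⟩,
      sMinus_zero_eq_comp_swap p hlt.ne⟩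
  · rw [Equiv.swap_comm]
    exact ⟨sMinusPerm p j i hlt.ne 0,
      Subgroup.subset_closure ⟨j, i, 0, hlt, hi, Or.inl rfl⟩,
      sMinus_zero_eq_comp_swap p hlt.ne⟩

/-- `W_p(D_s)` contains all permutations of the first `s` coordinates. -/
theorem exists_mem_WpD_eq_comp_perm {m : ℕ} (p : ℤ) {s : ℕ} (σ : Equiv.Perm (Fin m))
    (hσ : ∀ k : Fin m, s ≤ (k : ℕ) → σ k = k) :
    ∃ g ∈ WpD m p s, ∀ x, g x = x ∘ σ := by
  have key : ∀ τ : Equiv.Perm {k : Fin m // (k : ℕ) < s},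
      ∃ g ∈ WpD m p s, ∀ x, g x = x ∘ Equiv.Perm.ofSubtype τ := by
    intro τ
    induction τ using Equiv.Perm.swap_induction_on with
    | one => exact ⟨1, one_mem _, fun x => by simp⟩
    | swap_mul τ a b hab ih =>
      obtain ⟨g, hg, hgx⟩ := ih
      obtain ⟨g', hg', hgx'⟩ := exists_mem_WpD_eq_comp_swap p
        (fun h => hab (Subtype.ext h)) a.2 b.2
      refine ⟨g * g', mul_mem hg hg', fun x => ?_⟩
      rw [Equiv.Perm.mul_apply, hgx', hgx, map_mul, Equiv.Perm.ofSubtype_swap_eq]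
      rfl
  have hlt : ∀ k : Fin m, (σ k : ℕ) < s ↔ (k : ℕ) < s := by
    intro k
    refine ⟨fun h => ?_, fun h => ?_⟩
    · by_contra hk
      rw [hσ k (not_lt.1 hk)] at h
      exact hk h
    · by_contra hk
      have hfix := σ.injective (hσ (σ k) (not_lt.1 hk))
      rw [hfix] at hk
      exact hk h
  have hsub : Equiv.Perm.ofSubtype (σ.subtypePerm hlt) = σ :=
    Equiv.Perm.ofSubtype_subtypePerm hlt fun k hk => by
      by_contra hks
      exact hk (hσ k (not_lt.1 hks))
  have hkey := key (σ.subtypePerm hlt)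
  rwa [hsub] at hkey

theorem statement4 (m p : ℕ) (hp : p.Prime) (hodd : Odd p)
    (lam : Fin m → ℤ) (hpart : IsPartitionVec lam) (hcore : IsPCore p lam)
    (i j : Fin m) (hij : i < j) (hjlen : (j : ℕ) < plen lam)
    (a l : ℤ) (ha : 1 ≤ a) (hl : 1 ≤ l)
    (heq : (lam i + rho i) + (lam j + rho j) = a + l * p)
    (hpos : 0 < (lam j + rho j) - a)
    (v : Fin m → ℤ) (hv : v = sPlus (p : ℤ) i j l (fun t => lam t + rho t))
    (hreg : Regular v) :
    (∀ k k' : Fin m, k ≠ k' → v k ≠ v k') ∧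
    (∀ k, 0 < v k) ∧
    (∀ k : Fin m, (k : ℕ) < plen lam → (m : ℤ) - (plen lam : ℤ) < v k) ∧
    ∀ (mu : Fin m → ℤ) (σ : Equiv.Perm (Fin m)),
      (∀ k, mu k + rho k = v (σ k)) →
      (∀ k k' : Fin m, k ≤ k' → mu k' + rho k' ≤ mu k + rho k) →
      IsPartitionVec mu ∧ (∀ k, mu k ≤ lam k) ∧ mu ≠ lam ∧
      (∀ k : Fin m, plen lam ≤ (k : ℕ) → σ k = k) ∧
      DotConj (WpD m (p : ℤ) (plen lam)) lam mu := by
  have hij' : i ≠ j := hij.ne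
  have hxij := hpart.add_rho_lt hij
  have hvi : v i = lam i + rho i - a := by
    simp only [hv, sPlus, hij', if_true, if_false]
    linarith
  have hvj : v j = lam j + rho j - a := by
    simp only [hv, sPlus, hij'.symm, if_true, if_false]
    linarith
  have hvk : ∀ k, k ≠ i → k ≠ j → v k = lam k + rho k := by
    intro k hki hkj
    simp [hv, sPlus, hki, hkj]
  have hrho : ∀ k : Fin m, 0 < rho k := fun k => by
    have := k.isLt
    simp only [rho]
    omega
  have hvpos : ∀ k, 0 < v k := by
    intro k
    by_cases hki : k = i
    · rw [hki, hvi]; omega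
    · by_cases hkj : k = j
      · rw [hkj, hvj]; omega
      · rw [hvk k hki hkj]
        have := hpart.2 k
        have := hrho k
        omega
  have hvinj : ∀ k k', k ≠ k' → v k ≠ v k' := fun k k' hkk' h =>
    hreg.2 k k' hkk' (congrArg _ h)
  have hvle : ∀ k, v k ≤ lam k + rho k := by
    intro k
    by_cases hki : k = i
    · rw [hki, hvi]; omega
    · by_cases hkj : k = j
      · rw [hkj, hvj]; omega
      · rw [hvk k hki hkj]
  have hijn : (i : ℕ) < j := hij
  have htail : ∀ k : Fin m, plen lam ≤ (k : ℕ) → lam k = 0 ∧ v k = rho k := by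
    intro k hk
    have h0 : lam k = 0 := by
      by_contra h
      exact absurd (lt_plen_of_ne_zero hpart h) (not_lt.2 hk)
    refine ⟨h0, ?_⟩
    rw [hvk k (by rintro rfl; omega) (by rintro rfl; omega), h0, zero_add]
  refine ⟨hvinj, hvpos, ?_, ?_⟩
  · intro k hk
    by_contra hcon
    have hpk := hvpos k
    let t : Fin m := ⟨(m - v k).toNat, by omega⟩
    have htk : plen lam ≤ (t : ℕ) := by simp only [t]; omega
    refine hvinj k t (fun h => by rw [← h] at htk; omega) ?_
    rw [(htail t htk).2]
    simp only [rho, t]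
    omega
  · intro mu σ hmu hanti
    have hmupart : IsPartitionVec mu := by
      refine isPartitionVec_of_add_rho (fun k => hmu k ▸ hvpos _) fun k k' h => ?_
      refine lt_of_le_of_ne (hanti k k' h.le) ?_
      rw [hmu, hmu]
      exact hvinj _ _ fun h' => h.ne' (σ.injective h')
    have hmule : ∀ k, mu k ≤ lam k := by
      intro k
      have h := comp_perm_le_of_antitone (x := fun t => lam t + rho t) hvle
        (fun t t' h => h.eq_or_lt.elim (fun h => h ▸ le_rfl) fun h => (hpart.add_rho_lt h).le)
        σ (fun t t' h => by
          simpa only [Function.comp_apply, hmu] using hanti t t' h) k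
      rw [← hmu k] at h
      omega
    have hfix : ∀ k : Fin m, plen lam ≤ (k : ℕ) → σ k = k := by
      intro k hk
      obtain ⟨h0, hvk'⟩ := htail k hk
      have h1 := hmule k
      have h2 := hmupart.2 k
      by_contra hne
      refine hvinj _ _ hne ?_
      rw [← hmu k, hvk']
      omega
    refine ⟨hmupart, hmule, ?_, hfix, ?_⟩
    · rintro rfl
      have hsum : ∑ k, v k = ∑ k, (mu k + rho k) := by
        rw [← Equiv.sum_comp σ v]
        exact Finset.sum_congr rfl fun k _ => (hmu k).symm
      have hlt : ∑ k, v k < ∑ k, (mu k + rho k) :=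
        Finset.sum_lt_sum (fun k _ => hvle k) ⟨i, Finset.mem_univ i, by omega⟩
      exact hlt.ne hsum
    · obtain ⟨g, hg, hgx⟩ := exists_mem_WpD_eq_comp_perm (p : ℤ) σ hfix
      refine ⟨g * sPlusPerm p i j hij' l, mul_mem hg
        (Subgroup.subset_closure ⟨i, j, l, hij, hjlen, Or.inr rfl⟩), ?_⟩
      have hs : sPlusPerm (p : ℤ) i j hij' l (fun t => lam t + rho t) = v := hv.symm
      rw [Equiv.Perm.mul_apply, hs, hgx]
      exact funext fun k => (hmu k).symm
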